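/- Let G_1 = (V^{(1)},E^{(1)},w^{(1)},κ^{(1)}) be a weighted tree and G_2 = (V^{(2)},E^{(2)},w^{(2)},κ^{(2)}) a weighted bipartite graph, both with vertex measure identically 1 and nonnegative potentials κ^{(1)} ≥ 0, κ^{(2)} ≥ 0. Put n_1 = |V^{(1)}|, n_2 = |V^{(2)}|, and let G be the product graph of G_1 and G_2. Let {λ_i}_{i=1}^{n_1 n_2}, {λ^{(1)}_i}_{i=1}^{n_1} and {λ^{(2)}_i}_{i=1}^{n_2} be the eigenvalues of the Laplacians of G, G_1 and G_2 listed in ascending order. If λ^{(2)}_{n_2} < λ^{(1)}_{k+1} − λ^{(1)}_{k}, then ρ_{k n_2}(G) ≤ √(2 τ_G λ_{k n_2}). -/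

import Mathlib

open BigOperators Matrix Polynomial

/-- Conductance of a vertex subset `A`: boundary weight divided by its measure. -/
noncomputable def conductance {V : Type*} [Fintype V] [DecidableEq V]
    (w : V → V → ℝ) (μ : V → ℝ) (A : Finset V) : ℝ :=
  (∑ i ∈ A, ∑ j ∈ Aᶜ, w i j) / (∑ i ∈ A, μ i)

/-- The `k`-way Cheeger constant: infimum over `k`-tuples of pairwise disjoint
nonempty vertex subsets of the maximal conductance. -/
noncomputable def cheeger {V : Type*} [Fintype V] [DecidableEq V]
    (k : ℕ) (w : V → V → ℝ) (μ : V → ℝ) : ℝ :=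
  sInf {r | ∃ A : Fin k → Finset V, (∀ i, (A i).Nonempty) ∧
    Pairwise (Function.onFun Disjoint A) ∧ r = ⨆ i, conductance w μ (A i)}

/-- `τ_G = max_i d(i)/μ_i`. -/
noncomputable def tauMax {V : Type*} [Fintype V] (w : V → V → ℝ) (μ : V → ℝ) : ℝ :=
  ⨆ i, (∑ j, w i j) / μ i

/-- The (unnormalized) Laplacian `L = D + K - A` of a weighted graph with vertex
measure `≡ 1`. -/
noncomputable def lap {V : Type*} [Fintype V] [DecidableEq V]
    (w : V → V → ℝ) (κ : V → ℝ) : Matrix V V ℝ :=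
  Matrix.diagonal (fun i => ∑ j, w i j) + Matrix.diagonal κ - Matrix.of w

/-- The edge weight of the product of two weighted graphs. -/
noncomputable def prodWeight {V₁ V₂ : Type*} [DecidableEq V₁] [DecidableEq V₂]
    (w₁ : V₁ → V₁ → ℝ) (w₂ : V₂ → V₂ → ℝ) : V₁ × V₂ → V₁ × V₂ → ℝ :=
  fun p q => (if p.1 = q.1 then w₂ p.2 q.2 else 0) + (if p.2 = q.2 then w₁ p.1 q.1 else 0)

/-- The potential of the product graph: `κ_{(x,y)} = κ¹_x + κ²_y`. -/
noncomputable def prodPotential {V₁ V₂ : Type*} (κ₁ : V₁ → ℝ) (κ₂ : V₂ → ℝ) :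
    V₁ × V₂ → ℝ :=
  fun p => κ₁ p.1 + κ₂ p.2

lemma leaf_exists {V : Type*} [Fintype V] [DecidableEq V] (G : SimpleGraph V) (hG : G.IsTree)
    (S : Finset V) (hS : S.Nonempty) :
    ∃ v ∈ S, ∃ u, ∀ j ∈ S, G.Adj v j → j = u := by
  obtain ⟨r, hr⟩ := hS
  obtain ⟨v, hv, hmax⟩ := S.exists_max_image (fun x => G.dist r x) ⟨r, hr⟩
  obtain ⟨q, hq, -⟩ := (hG.connected r v).exists_path_of_dist
  refine ⟨v, hv, q.penultimate, fun j hj hadj => ?_⟩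
  obtain ⟨p, hp, hpl⟩ := (hG.connected r j).exists_path_of_dist
  have hd : G.dist r v = G.dist r j + 1 := by
    have h1 := hmax j hj
    rcases hG.dist_eq_dist_add_one_of_adj r hadj with h | h
    · exact h
    · omega
  have hpc : (p.concat hadj.symm).IsPath := by
    apply SimpleGraph.Walk.isPath_of_length_eq_dist
    rw [SimpleGraph.Walk.length_concat, hpl, hd]
  have := Subtype.mk.inj (hG.isAcyclic.subsingleton_path r v |>.elim ⟨q, hq⟩ ⟨_, hpc⟩)
  rw [this]
  simp

lemma quad_schur {V : Type*} [Fintype V] [DecidableEq V] (M : Matrix V V ℝ) (m : ℝ)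
    (c f : V → ℝ) :
    f ⬝ᵥ (M - m⁻¹ • Matrix.vecMulVec c c) *ᵥ f = f ⬝ᵥ M *ᵥ f - (c ⬝ᵥ f) ^ 2 / m := by
  rw [Matrix.sub_mulVec, Matrix.smul_mulVec, dotProduct_sub, dotProduct_smul,
    Matrix.vecMulVec_mulVec]
  simp [dotProduct_comm f c]
  ring

lemma quad_add_single {V : Type*} [Fintype V] [DecidableEq V] (M : Matrix V V ℝ) (v : V)
    (h1 : ∀ j, M v j = 0) (h2 : ∀ j, M j v = 0) (f : V → ℝ) (c : ℝ) :
    (f + c • Pi.single v 1) ⬝ᵥ M *ᵥ (f + c • Pi.single v 1) = f ⬝ᵥ M *ᵥ f := by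
  have e : M *ᵥ (Pi.single v (1:ℝ)) = 0 := by
    ext j; simp [h2]
  rw [Matrix.mulVec_add, Matrix.mulVec_smul, e]
  have e2 : (M *ᵥ f) v = 0 := by
    simp [Matrix.mulVec, dotProduct, h1]
  simp [add_dotProduct, e2]

/-- Courant-type disjointification on trees by leaf elimination. -/
lemma tree_disjoint {V : Type*} [Fintype V] [DecidableEq V] (G : SimpleGraph V)
    (hG : G.IsTree) (n : ℕ) :
    ∀ (S : Finset V), S.card = n → ∀ (M : Matrix V V ℝ), (∀ i j, M i j = M j i) →
    (∀ i ∈ S, ∀ j ∈ S, i ≠ j → ¬ G.Adj i j → M i j = 0) →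
    ∀ (k : ℕ) (W : Submodule ℝ (V → ℝ)), k ≤ Module.finrank ℝ W →
    (∀ f ∈ W, ∀ i ∉ S, f i = 0) → (∀ f ∈ W, f ⬝ᵥ M *ᵥ f ≤ 0) →
    ∃ g : Fin k → V → ℝ, (∀ a, g a ≠ 0) ∧ (∀ a, ∀ i ∉ S, g a i = 0) ∧
      (∀ a b, a ≠ b → ∀ x, g a x = 0 ∨ g b x = 0) ∧ (∀ a, g a ⬝ᵥ M *ᵥ g a ≤ 0) := by
  induction n with
  | zero =>
    intro S hS M _ _ k W hk hW _
    have hS : S = ∅ := Finset.card_eq_zero.mp hS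
    subst hS
    have : W = ⊥ := by
      rw [eq_bot_iff]
      intro f hf
      rw [Submodule.mem_bot]
      ext i
      exact hW f hf i (by simp)
    subst this
    have : k = 0 := by simpa using hk
    subst this
    exact ⟨fun _ _ => 0, fun a => a.elim0, fun a => a.elim0, fun a => a.elim0, fun a => a.elim0⟩
  | succ n ih =>
    intro S hS M hsym hM k W hk hW hq
    obtain ⟨v, hv, u, hu⟩ := leaf_exists G hG S (Finset.card_pos.mp (by omega))
    have hcard : (S.erase v).card = n := by rw [Finset.card_erase_of_mem hv]; omega
    by_cases hm : M v v ≤ 0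
    · -- use the singleton
      rcases k with _ | k
      · exact ⟨fun _ _ => 0, fun a => a.elim0, fun a => a.elim0, fun a => a.elim0,
          fun a => a.elim0⟩
      let K : Submodule ℝ (V → ℝ) := LinearMap.ker (LinearMap.proj v : (V → ℝ) →ₗ[ℝ] ℝ)
      have hK : Module.finrank ℝ (V → ℝ) ≤ Module.finrank ℝ K + 1 := by
        have h := LinearMap.finrank_range_add_finrank_ker (LinearMap.proj v : (V → ℝ) →ₗ[ℝ] ℝ)
        have h2 := Submodule.finrank_le (LinearMap.range (LinearMap.proj v : (V → ℝ) →ₗ[ℝ] ℝ))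
        simp only [Module.finrank_self] at h2
        change _ + Module.finrank ℝ K = _ at h
        omega
      have hk' : k ≤ Module.finrank ℝ (W ⊓ K : Submodule ℝ (V → ℝ)) := by
        have h := Submodule.finrank_sup_add_finrank_inf_eq W K
        have h2 := Submodule.finrank_le (W ⊔ K)
        omega
      obtain ⟨g, h1, h2, h3, h4⟩ := ih (S.erase v) hcard M hsym
        (fun i hi j hj => hM i (Finset.mem_of_mem_erase hi) j (Finset.mem_of_mem_erase hj)) k
        (W ⊓ K) hk' (by
          intro f hf i hi
          by_cases hiv : i = v
          · subst hiv; exact hf.2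
          · exact hW f hf.1 i (fun h => hi (Finset.mem_erase.mpr ⟨hiv, h⟩)))
        (fun f hf => hq f hf.1)
      refine ⟨Fin.cons (Pi.single v 1) g, ?_, ?_, ?_, ?_⟩
      · intro a
        refine Fin.cases ?_ ?_ a
        · simp
        · simpa using h1
      · intro a
        refine Fin.cases ?_ ?_ a
        · intro i hi
          have : i ≠ v := by rintro rfl; exact hi hv
          simp [this]
        · intro b i hi
          simpa using h2 b i (fun h => hi (Finset.mem_of_mem_erase h))
      · have key : ∀ b x, (Pi.single v (1:ℝ) : V → ℝ) x = 0 ∨ g b x = 0 := by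
          intro b x
          by_cases hx : x = v
          · right; exact h2 b x (by simp [hx])
          · left; simp [hx]
        intro a b
        refine Fin.cases ?_ ?_ a
        · refine Fin.cases ?_ ?_ b
          · simp
          · intro b _ x; simpa using key b x
        · intro a
          refine Fin.cases ?_ ?_ b
          · intro _ x; simpa using (key a x).symm
          · intro b hab x
            simpa using h3 a b (by simpa using hab) x
      · intro a
        refine Fin.cases ?_ ?_ a
        · simpa using hm
        · simpa using h4
    · push Not at hm
      set c : V → ℝ := fun j => M v j with hc
      set M' := M - (M v v)⁻¹ • Matrix.vecMulVec c c with hM'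
      have hM'v : ∀ j, M' v j = 0 := by
        intro j
        simp [hM', hc, Matrix.vecMulVec_apply]
        field_simp
        ring
      have hM's : ∀ i j, M' i j = M' j i := by
        intro i j
        simp [hM', Matrix.vecMulVec_apply, hsym i j, mul_comm]
      have hM'v2 : ∀ j, M' j v = 0 := fun j => by rw [hM's, hM'v]
      let P : (V → ℝ) →ₗ[ℝ] (V → ℝ) :=
        { toFun := fun f => f + (-(f v)) • Pi.single v 1
          map_add' := by intro f g; simp; module
          map_smul' := by intro r f; simp; module }
      have hP : ∀ f, P f = f + (-(f v)) • Pi.single v 1 := fun f => rfl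
      have hPv : ∀ f, P f v = 0 := by intro f; simp [hP]
      have hPne : ∀ f i, i ≠ v → P f i = f i := by intro f i hi; simp [hP, hi]
      have hinj : Function.Injective (P.domRestrict W) := by
        rw [← LinearMap.ker_eq_bot, LinearMap.ker_eq_bot']
        rintro ⟨f, hf⟩ h
        have h' : P f = 0 := h
        have hf' : f = f v • Pi.single v 1 := by
          rw [hP] at h'
          have := eq_neg_of_add_eq_zero_left h'
          rw [neg_smul, neg_neg] at this
          exact this
        have hqf := hq f hf
        rw [hf'] at hqf
        simp [Matrix.mulVec_smul] at hqf
        have : f v = 0 := by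
          by_contra hne
          have : 0 < f v * (f v * M v v) := by
            have := mul_self_pos.mpr hne
            rw [← mul_assoc]; positivity
          linarith
        have hf0 : f = 0 := by rw [hf', this]; simp
        exact Subtype.ext hf0
      have hk' : k ≤ Module.finrank ℝ (W.map P) := by
        rw [← LinearMap.range_domRestrict, LinearMap.finrank_range_of_inj hinj]
        exact hk
      obtain ⟨g, h1, h2, h3, h4⟩ := ih (S.erase v) hcard M' hM's (by
          intro i hi j hj hij hadj
          have hi' := Finset.mem_of_mem_erase hi
          have hj' := Finset.mem_of_mem_erase hj
          have e1 := hM i hi' j hj' hij hadj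
          have e2 : M v i * M v j = 0 := by
            by_contra hne
            have hvi : M v i ≠ 0 := left_ne_zero_of_mul hne
            have hvj : M v j ≠ 0 := right_ne_zero_of_mul hne
            have a1 : i = u := hu i hi' (by
              by_contra hh
              exact hvi (hM v hv i hi' (Finset.ne_of_mem_erase hi).symm hh))
            have a2 : j = u := hu j hj' (by
              by_contra hh
              exact hvj (hM v hv j hj' (Finset.ne_of_mem_erase hj).symm hh))
            exact hij (a1.trans a2.symm)
          simp [hM', hc, Matrix.vecMulVec_apply, e1, e2]) k (W.map P) hk' (by
          rintro _ ⟨f, hf, rfl⟩ i hi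
          by_cases hiv : i = v
          · subst hiv; exact hPv f
          · rw [hPne f i hiv]
            exact hW f hf i (fun h => hi (Finset.mem_erase.mpr ⟨hiv, h⟩))) (by
          rintro _ ⟨f, hf, rfl⟩
          rw [hP, quad_add_single M' v hM'v hM'v2, hM', quad_schur]
          have := hq f hf
          have h2 : 0 ≤ (c ⬝ᵥ f) ^ 2 / M v v := by positivity
          linarith)
      have hgv : ∀ a, g a v = 0 := fun a => h2 a v (by simp)
      have hcu : ∀ a, c ⬝ᵥ g a ≠ 0 → g a u ≠ 0 := by
        intro a h hgu
        apply h
        apply Finset.sum_eq_zero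
        intro j _
        by_cases hj : j ∈ S.erase v
        · by_cases hadj : G.Adj v j
          · rw [hu j (Finset.mem_of_mem_erase hj) hadj, hgu, mul_zero]
          · have : c j = 0 := hM v hv j (Finset.mem_of_mem_erase hj)
              (Finset.ne_of_mem_erase hj).symm hadj
            rw [this, zero_mul]
        · rw [h2 a j hj, mul_zero]
      set s : Fin k → ℝ := fun a => -(c ⬝ᵥ g a) / M v v with hs
      refine ⟨fun a => g a + s a • Pi.single v 1, ?_, ?_, ?_, ?_⟩
      · intro a h
        apply h1 a
        ext i
        by_cases hi : i = v
        · rw [hi, hgv]; rfl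
        · have := congrFun h i
          simpa [hi] using this
      · intro a i hi
        have hiv : i ≠ v := by rintro rfl; exact hi hv
        simpa [hiv] using h2 a i (fun h => hi (Finset.mem_of_mem_erase h))
      · intro a b hab x
        by_cases hx : x = v
        · subst hx
          simp only [Pi.add_apply, hgv, Pi.smul_apply, Pi.single_eq_same, smul_eq_mul, mul_one,
            zero_add, hs]
          by_contra! hne
          have ha : c ⬝ᵥ g a ≠ 0 := by
            intro h; apply hne.1; simp [h]
          have hb : c ⬝ᵥ g b ≠ 0 := by
            intro h; apply hne.2; simp [h]
          rcases h3 a b hab u with h | h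
          · exact hcu a ha h
          · exact hcu b hb h
        · simpa [hx] using h3 a b hab x
      · intro a
        have e := h4 a
        rw [← quad_add_single M' v hM'v hM'v2 (g a) (s a), hM', quad_schur] at e
        have e0 : c ⬝ᵥ (g a + s a • Pi.single v 1) = 0 := by
          simp [dotProduct_add, hs, hc]
          field_simp
          ring
        rw [e0] at e
        simpa using e

lemma coarea {V : Type*} [Fintype V] [DecidableEq V] (w : V → V → ℝ) (c : ℝ) (n : ℕ) :
    ∀ (h : V → ℝ), (∀ i, 0 ≤ h i) → (Finset.univ.filter (fun i => h i ≠ 0)).card = n →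
    (∀ A : Finset V, A.Nonempty → (∀ i ∈ A, h i ≠ 0) → c * A.card ≤ ∑ i ∈ A, ∑ j ∈ Aᶜ, w i j) →
    c * ∑ i, h i ≤ ∑ i, ∑ j, w i j * max (h i - h j) 0 := by
  induction n using Nat.strong_induction_on with
  | _ n ih =>
    intro h h0 hn hA
    set S := Finset.univ.filter (fun i => h i ≠ 0) with hS
    have hmemS : ∀ i, i ∈ S ↔ h i ≠ 0 := by intro i; simp [hS]
    by_cases hSe : S.Nonempty
    · obtain ⟨x, hx, hmin⟩ := S.exists_min_image h hSe
      set m := h x with hm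
      have hmpos : 0 < m := lt_of_le_of_ne (h0 x) (Ne.symm ((hmemS x).mp hx))
      set h' : V → ℝ := fun i => if i ∈ S then h i - m else 0 with hh'
      have hsub : ∀ i, h' i ≠ 0 → h i ≠ 0 := by
        intro i hi
        by_contra hne
        apply hi
        have : i ∉ S := by rw [hmemS]; simpa using hne
        simp [hh', this]
      have hlt : (Finset.univ.filter (fun i => h' i ≠ 0)).card < n := by
        rw [← hn]
        apply Finset.card_lt_card
        rw [Finset.ssubset_iff_of_subset]
        · exact ⟨x, hx, by simp [hh', hm]⟩
        · intro i hi
          rw [hmemS]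
          exact hsub i (by simpa using hi)
      have key := ih _ hlt h' (by
        intro i
        by_cases hi : i ∈ S
        · simp only [hh', hi, if_true]; linarith [hmin i hi]
        · simp [hh', hi]) rfl (fun A hAn hAs => hA A hAn (fun i hi => hsub i (hAs i hi)))
      have hSb := hA S hSe (fun i hi => (hmemS i).mp hi)
      have e1 : ∑ i, h i = ∑ i, h' i + m * S.card := by
        have : ∀ i, h i = h' i + if i ∈ S then m else 0 := by
          intro i
          by_cases hi : i ∈ S
          · simp [hh', hi]
          · have : h i = 0 := by simpa using mt (hmemS i).mpr hi
            simp [hh', hi, this]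
        rw [Finset.sum_congr rfl (fun i _ => this i), Finset.sum_add_distrib]
        simp [mul_comm]
      have e2 : ∑ i, ∑ j, w i j * max (h i - h j) 0 =
          ∑ i, ∑ j, w i j * max (h' i - h' j) 0 + m * ∑ i ∈ S, ∑ j ∈ Sᶜ, w i j := by
        have : ∀ i j, w i j * max (h i - h j) 0 = w i j * max (h' i - h' j) 0 +
            (if i ∈ S then if j ∈ Sᶜ then m * w i j else 0 else 0) := by
          intro i j
          by_cases hi : i ∈ S
          · by_cases hj : j ∈ S
            · simp [hh', hi, hj]
            · have hj0 : h j = 0 := by simpa using mt (hmemS j).mpr hj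
              have := hmin i hi
              simp only [hh', hi, hj, hj0, if_true, if_false, Finset.mem_compl, not_false_eq_true,
                sub_zero]
              rw [max_eq_left (h0 i), max_eq_left (by linarith)]
              ring
          · have hi0 : h i = 0 := by simpa using mt (hmemS i).mpr hi
            have a1 : max (h i - h j) 0 = 0 := max_eq_right (by rw [hi0]; linarith [h0 j])
            have a2 : max (h' i - h' j) 0 = 0 := by
              apply max_eq_right
              by_cases hj : j ∈ S
              · simp only [hh', hi, hj, if_true, if_false]; linarith [hmin j hj]
              · simp [hh', hi, hj]
            rw [a1, a2]; simp [hi]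
        simp_rw [this, Finset.sum_add_distrib]
        congr 1
        rw [Finset.mul_sum]
        simp_rw [Finset.mul_sum]
        rw [← Finset.sum_filter_add_sum_filter_not Finset.univ (· ∈ S)]
        have z : ∑ x with x ∉ S, ∑ x_1, (if x ∈ S then if x_1 ∈ Sᶜ then m * w x x_1 else 0 else 0)
            = 0 := by
          apply Finset.sum_eq_zero
          intro i hi
          have : i ∉ S := by simpa using hi
          simp [this]
        rw [z, add_zero, Finset.filter_mem_eq_inter, Finset.univ_inter]
        apply Finset.sum_congr rfl
        intro i hi
        simp only [hi, if_true]
        rw [← Finset.sum_filter, Finset.filter_mem_eq_inter, Finset.univ_inter]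
      rw [e1, e2]
      have := mul_le_mul_of_nonneg_left hSb hmpos.le
      linarith
    · have hz : ∀ i, h i = 0 := by
        intro i
        by_contra hne
        exact hSe ⟨i, (hmemS i).mpr hne⟩
      simp [hz]

lemma cheeger_level {V : Type*} [Fintype V] [DecidableEq V] (w : V → V → ℝ)
    (hs : ∀ i j, w i j = w j i) (h0 : ∀ i j, 0 ≤ w i j) (τ lam : ℝ)
    (hτ : ∀ i, ∑ j, w i j ≤ τ) (g : V → ℝ) (hg : g ≠ 0)
    (hE : ∑ i, ∑ j, w i j * (g i - g j) ^ 2 ≤ 2 * lam * ∑ i, g i ^ 2) :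
    ∃ A : Finset V, A.Nonempty ∧ (∀ i ∈ A, g i ≠ 0) ∧
      conductance w (fun _ => 1) A ≤ Real.sqrt (2 * τ * lam) := by
  have hgx : ∃ x, g x ≠ 0 := by
    by_contra! h
    exact hg (funext h)
  obtain ⟨x, hx⟩ := hgx
  set F := Finset.univ.filter (fun A : Finset V => A.Nonempty ∧ ∀ i ∈ A, g i ≠ 0) with hF
  have hFn : F.Nonempty := ⟨{x}, by simp [hF, hx]⟩
  obtain ⟨A, hAF, hmin⟩ := F.exists_min_image (conductance w (fun _ => 1)) hFn
  have hA : A.Nonempty ∧ ∀ i ∈ A, g i ≠ 0 := by simpa [hF] using hAF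
  refine ⟨A, hA.1, hA.2, ?_⟩
  set c := conductance w (fun _ => 1) A with hc
  have hco := coarea w c _ (fun i => g i ^ 2) (fun i => sq_nonneg _) rfl (by
    intro B hB hBs
    have hBF : B ∈ F := by
      simp only [hF, Finset.mem_filter, Finset.mem_univ, true_and]
      exact ⟨hB, fun i hi => by simpa using hBs i hi⟩
    have h1 := hmin B hBF
    have hpos : (0:ℝ) < B.card := by exact_mod_cast hB.card_pos
    unfold conductance at h1
    simp only [Finset.sum_const, nsmul_eq_mul, mul_one] at h1
    rw [le_div_iff₀ hpos] at h1
    simpa [hc, conductance] using h1)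
  set N := ∑ i, g i ^ 2 with hN
  have hNpos : 0 < N := by
    apply Finset.sum_pos' (fun i _ => sq_nonneg _)
    exact ⟨x, Finset.mem_univ _, by positivity⟩
  have hc0 : 0 ≤ c := by
    rw [hc]; unfold conductance
    apply div_nonneg
    · exact Finset.sum_nonneg (fun i _ => Finset.sum_nonneg (fun j _ => h0 i j))
    · simp
  -- symmetrization
  set X := ∑ i, ∑ j, w i j * max (g i ^ 2 - g j ^ 2) 0 with hX
  have hsymX : 2 * X = ∑ i, ∑ j, w i j * |g i ^ 2 - g j ^ 2| := by
    have e : X = ∑ i, ∑ j, w i j * max (g j ^ 2 - g i ^ 2) 0 := by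
      rw [hX, Finset.sum_comm]
      apply Finset.sum_congr rfl; intro i _
      apply Finset.sum_congr rfl; intro j _
      rw [hs j i]
    rw [two_mul]
    nth_rewrite 2 [e]
    rw [hX, ← Finset.sum_add_distrib]
    apply Finset.sum_congr rfl; intro i _
    rw [← Finset.sum_add_distrib]
    apply Finset.sum_congr rfl; intro j _
    rw [← mul_add]
    congr 1
    rcases le_total (g i ^ 2) (g j ^ 2) with h | h
    · rw [max_eq_right (by linarith), max_eq_left (by linarith), abs_of_nonpos (by linarith)]; ring
    · rw [max_eq_left (by linarith), max_eq_right (by linarith), abs_of_nonneg (by linarith)]; ring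
  have hP : ∑ i, ∑ j, w i j * (g i + g j) ^ 2 ≤ 4 * τ * N := by
    have h1 : ∑ i, ∑ j, w i j * (g i + g j) ^ 2 ≤
        ∑ i, ∑ j, (2 * (w i j * g i ^ 2) + 2 * (w i j * g j ^ 2)) := by
      apply Finset.sum_le_sum; intro i _
      apply Finset.sum_le_sum; intro j _
      nlinarith [mul_nonneg (h0 i j) (sq_nonneg (g i - g j))]
    have h2 : ∑ i, ∑ j, w i j * g i ^ 2 ≤ τ * N := by
      rw [hN, Finset.mul_sum]
      apply Finset.sum_le_sum; intro i _
      rw [← Finset.sum_mul]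
      exact mul_le_mul_of_nonneg_right (hτ i) (sq_nonneg _)
    have h3 : ∑ i, ∑ j, w i j * g j ^ 2 = ∑ i, ∑ j, w i j * g i ^ 2 := by
      rw [Finset.sum_comm]
      apply Finset.sum_congr rfl; intro i _
      apply Finset.sum_congr rfl; intro j _
      rw [hs j i]
    simp_rw [Finset.sum_add_distrib, ← Finset.mul_sum] at h1
    linarith
  have hCS : (∑ i, ∑ j, w i j * |g i ^ 2 - g j ^ 2|) ^ 2 ≤
      (∑ i, ∑ j, w i j * (g i - g j) ^ 2) * (∑ i, ∑ j, w i j * (g i + g j) ^ 2) := by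
    simp_rw [← Finset.sum_product']
    apply Finset.sum_sq_le_sum_mul_sum_of_sq_le_mul
    · intro p _; exact mul_nonneg (h0 _ _) (sq_nonneg _)
    · intro p _; exact mul_nonneg (h0 _ _) (sq_nonneg _)
    · intro p _
      rw [mul_pow, sq_abs]; apply le_of_eq; ring
  have hD0 : 0 ≤ ∑ i, ∑ j, w i j * (g i - g j) ^ 2 :=
    Finset.sum_nonneg (fun i _ => Finset.sum_nonneg (fun j _ => mul_nonneg (h0 _ _) (sq_nonneg _)))
  have hP0 : 0 ≤ ∑ i, ∑ j, w i j * (g i + g j) ^ 2 :=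
    Finset.sum_nonneg (fun i _ => Finset.sum_nonneg (fun j _ => mul_nonneg (h0 _ _) (sq_nonneg _)))
  apply Real.le_sqrt_of_sq_le
  have hf : (2 * (c * N)) ^ 2 ≤ (2 * lam * N) * (4 * τ * N) := by
    calc (2 * (c * N)) ^ 2 ≤ (2 * X) ^ 2 := by
          apply pow_le_pow_left₀ (by positivity)
          linarith
      _ ≤ _ := by rw [hsymX]; exact hCS
      _ ≤ _ := mul_le_mul hE hP hP0 (hD0.trans hE)
  have hN2 : 0 < N ^ 2 := by positivity
  have : c ^ 2 * (4 * N ^ 2) ≤ (2 * τ * lam) * (4 * N ^ 2) := by nlinarith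
  exact le_of_mul_le_mul_right this (by positivity)

lemma roots_equiv {α β : Type*} [Fintype α] [Fintype β] (f : α → ℝ) (g : β → ℝ)
    (h : ∏ i, (X - C (f i)) = ∏ i, (X - C (g i))) : ∃ σ : α ≃ β, ∀ a, g (σ a) = f a := by
  classical
  have h' := congrArg Polynomial.roots h
  rw [Polynomial.roots_prod _ _ (by simp [Finset.prod_ne_zero_iff, Polynomial.X_sub_C_ne_zero]),
    Polynomial.roots_prod _ _ (by simp [Finset.prod_ne_zero_iff, Polynomial.X_sub_C_ne_zero])] at h'
  simp only [Polynomial.roots_X_sub_C, Multiset.bind_singleton] at h'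
  have e : ∀ c, Nonempty ({a // f a = c} ≃ {b // g b = c}) := by
    intro c
    apply Fintype.card_eq.mp
    have := congrArg (Multiset.count c) h'
    rw [Multiset.count_map, Multiset.count_map] at this
    rw [Fintype.card_subtype, Fintype.card_subtype, Finset.card_def, Finset.card_def,
      Finset.filter_val, Finset.filter_val]
    simpa [eq_comm] using this
  exact ⟨Equiv.ofFiberEquiv (fun c => (e c).some), fun a => Equiv.ofFiberEquiv_map _ a⟩

lemma spec {n : ℕ} (A : Matrix (Fin n) (Fin n) ℝ) (hA : ∀ i j, A i j = A j i) (lam : Fin n → ℝ)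
    (h : A.charpoly = ∏ i, (X - C (lam i))) :
    ∃ U : Matrix (Fin n) (Fin n) ℝ, Uᵀ * U = 1 ∧ U * Uᵀ = 1 ∧ Uᵀ * A * U = diagonal lam ∧
      A = U * diagonal lam * Uᵀ := by
  have hH : A.IsHermitian := by
    ext i j; simp [hA j i]
  have hc := hH.charpoly_eq
  rw [h] at hc
  obtain ⟨σ, hσ⟩ := roots_equiv _ _ hc
  set Q : Matrix (Fin n) (Fin n) ℝ := hH.eigenvectorUnitary.1 with hQ
  have hQ1 : Qᵀ * Q = 1 := by
    have := Unitary.coe_star_mul_self hH.eigenvectorUnitary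
    simpa [star_eq_conjTranspose] using this
  have hd : Qᵀ * A * Q = diagonal hH.eigenvalues := by
    have := hH.conjStarAlgAut_star_eigenvectorUnitary
    rw [Unitary.conjStarAlgAut_star_apply] at this
    simpa [star_eq_conjTranspose, Function.comp_def] using this
  have h1 : (Q.submatrix id σ)ᵀ * (Q.submatrix id σ) = 1 := by
    have : (Q.submatrix id σ)ᵀ * (Q.submatrix id σ) = (Qᵀ * Q).submatrix σ σ := by
      ext i j; simp [Matrix.mul_apply]
    rw [this, hQ1]; simp
  have h2 := mul_eq_one_comm.mp h1
  have h3 : (Q.submatrix id σ)ᵀ * A * (Q.submatrix id σ) = diagonal lam := by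
    have : (Q.submatrix id σ)ᵀ * A * (Q.submatrix id σ) = (Qᵀ * A * Q).submatrix σ σ := by
      ext i j; simp [Matrix.mul_apply]
    rw [this, hd, Matrix.submatrix_diagonal_equiv]
    congr 1
    ext i
    exact hσ i
  refine ⟨Q.submatrix id σ, h1, h2, h3, ?_⟩
  rw [← h3]
  generalize Q.submatrix id σ = U at *
  calc A = (U * Uᵀ) * A * (U * Uᵀ) := by rw [h2]; simp
    _ = _ := by simp only [Matrix.mul_assoc]

lemma lap_quad {V : Type*} [Fintype V] [DecidableEq V] (w : V → V → ℝ) (κ : V → ℝ)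
    (hs : ∀ i j, w i j = w j i) (g : V → ℝ) :
    ∑ i, ∑ j, w i j * (g i - g j) ^ 2 + 2 * ∑ i, κ i * g i ^ 2 =
      2 * (g ⬝ᵥ lap w κ *ᵥ g) := by
  have h1 : g ⬝ᵥ lap w κ *ᵥ g = ∑ i, ∑ j, w i j * g i ^ 2 + ∑ i, κ i * g i ^ 2
      - ∑ i, ∑ j, w i j * (g i * g j) := by
    rw [lap, Matrix.sub_mulVec, Matrix.add_mulVec, dotProduct_sub, dotProduct_add]
    simp only [dotProduct, Matrix.mulVec_diagonal]
    congr 1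
    · congr 1
      · apply Finset.sum_congr rfl; intro i _
        rw [← Finset.sum_mul]; ring
      · apply Finset.sum_congr rfl; intro i _
        ring
    · apply Finset.sum_congr rfl; intro i _
      simp only [Matrix.mulVec, dotProduct, Matrix.of_apply, Finset.mul_sum]
      apply Finset.sum_congr rfl; intro j _
      ring
  have h3 : ∑ i, ∑ j, w i j * g j ^ 2 = ∑ i, ∑ j, w i j * g i ^ 2 := by
    rw [Finset.sum_comm]
    apply Finset.sum_congr rfl; intro i _
    apply Finset.sum_congr rfl; intro j _
    rw [hs j i]
  have h2 : ∑ i, ∑ j, w i j * (g i - g j) ^ 2 = ∑ i, ∑ j, w i j * g i ^ 2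
      + ∑ i, ∑ j, w i j * g j ^ 2 - 2 * ∑ i, ∑ j, w i j * (g i * g j) := by
    simp_rw [Finset.mul_sum, ← Finset.sum_add_distrib, ← Finset.sum_sub_distrib]
    apply Finset.sum_congr rfl; intro i _
    apply Finset.sum_congr rfl; intro j _
    ring
  rw [h1, h2, h3]; ring

lemma lap_symm {V : Type*} [Fintype V] [DecidableEq V] (w : V → V → ℝ) (κ : V → ℝ)
    (hs : ∀ i j, w i j = w j i) (i j : V) : lap w κ i j = lap w κ j i := by
  by_cases h : i = j
  · subst h; rfl
  · simp [lap, h, Ne.symm h, hs i j]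

lemma lap_prod {V₁ V₂ : Type*} [Fintype V₁] [DecidableEq V₁] [Fintype V₂] [DecidableEq V₂]
    (w₁ : V₁ → V₁ → ℝ) (w₂ : V₂ → V₂ → ℝ) (κ₁ : V₁ → ℝ) (κ₂ : V₂ → ℝ) :
    lap (prodWeight w₁ w₂) (prodPotential κ₁ κ₂) =
      Matrix.kronecker (lap w₁ κ₁) 1 + Matrix.kronecker 1 (lap w₂ κ₂) := by
  have hd : ∀ p : V₁ × V₂, ∑ q, prodWeight w₁ w₂ p q = ∑ j, w₁ p.1 j + ∑ j, w₂ p.2 j := by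
    rintro ⟨x, y⟩
    simp only [prodWeight, Finset.sum_add_distrib]
    rw [add_comm]
    congr 1
    · rw [Fintype.sum_prod_type]; simp
    · rw [Fintype.sum_prod_type_right]; simp
  ext ⟨x, y⟩ ⟨x', y'⟩
  rw [lap]
  simp_rw [hd]
  simp only [lap, Matrix.sub_apply, Matrix.add_apply, Matrix.diagonal_apply,
    Matrix.kronecker, Matrix.kroneckerMap_apply, Matrix.one_apply, Matrix.of_apply, Prod.mk.injEq,
    prodPotential, prodWeight]
  by_cases h1 : x = x' <;> by_cases h2 : y = y' <;> simp [h1, h2] <;> ring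

/-- **Higher-order Cheeger inequality for a product of a tree and a bipartite graph.**
Let `G₁` be a weighted tree and `G₂` a weighted bipartite graph, both with vertex measure
`≡ 1` and nonnegative potentials, and let `G` be their product. If the largest Laplacian
eigenvalue of `G₂` satisfies `λ²_{n₂} < λ¹_{k+1} - λ¹_k`, then
`ρ_{k n₂}(G) ≤ √(2 τ_G λ_{k n₂})`. -/
theorem cheeger_product_tree_bipartite (n₁ n₂ : ℕ) (hn₂ : 0 < n₂)
    (G₁ : SimpleGraph (Fin n₁)) [DecidableRel G₁.Adj]
    (G₂ : SimpleGraph (Fin n₂)) [DecidableRel G₂.Adj]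
    (hconn : G₁.Connected) (htree : G₁.edgeFinset.card = n₁ - 1)
    (hbip : G₂.Colorable 2)
    (w₁ : Fin n₁ → Fin n₁ → ℝ) (w₂ : Fin n₂ → Fin n₂ → ℝ)
    (hsymm₁ : ∀ i j, w₁ i j = w₁ j i) (hsymm₂ : ∀ i j, w₂ i j = w₂ j i)
    (hpos₁ : ∀ i j, G₁.Adj i j → 0 < w₁ i j) (hpos₂ : ∀ i j, G₂.Adj i j → 0 < w₂ i j)
    (hzero₁ : ∀ i j, ¬ G₁.Adj i j → w₁ i j = 0) (hzero₂ : ∀ i j, ¬ G₂.Adj i j → w₂ i j = 0)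
    (κ₁ : Fin n₁ → ℝ) (κ₂ : Fin n₂ → ℝ) (hκ₁ : ∀ i, 0 ≤ κ₁ i) (hκ₂ : ∀ i, 0 ≤ κ₂ i)
    (lam₁ : Fin n₁ → ℝ) (hmono₁ : Monotone lam₁)
    (hchar₁ : (lap w₁ κ₁).charpoly = ∏ i, (X - C (lam₁ i)))
    (lam₂ : Fin n₂ → ℝ) (hmono₂ : Monotone lam₂)
    (hchar₂ : (lap w₂ κ₂).charpoly = ∏ i, (X - C (lam₂ i)))
    (lam : Fin (n₁ * n₂) → ℝ) (hmono : Monotone lam)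
    (hchar : (lap (prodWeight w₁ w₂) (prodPotential κ₁ κ₂)).charpoly =
      ∏ i, (X - C (lam i)))
    (k : ℕ) (hk₁ : 1 ≤ k) (hk₂ : k + 1 ≤ n₁)
    (hgap : lam₂ ⟨n₂ - 1, by omega⟩ < lam₁ ⟨k, by omega⟩ - lam₁ ⟨k - 1, by omega⟩) :
    cheeger (k * n₂) (prodWeight w₁ w₂) (fun _ => 1) ≤
      Real.sqrt (2 * tauMax (prodWeight w₁ w₂) (fun _ => 1) *
        lam ⟨k * n₂ - 1, by
          have h1 : k * n₂ < n₁ * n₂ := mul_lt_mul_of_pos_right (by omega) hn₂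
          omega⟩) := by
  classical
  set L₁ := lap w₁ κ₁ with hL₁
  set L₂ := lap w₂ κ₂ with hL₂
  have hw₁ : ∀ i j, 0 ≤ w₁ i j := fun i j => by
    by_cases h : G₁.Adj i j
    · exact (hpos₁ i j h).le
    · exact (hzero₁ i j h).ge
  have hw₂ : ∀ i j, 0 ≤ w₂ i j := fun i j => by
    by_cases h : G₂.Adj i j
    · exact (hpos₂ i j h).le
    · exact (hzero₂ i j h).ge
  obtain ⟨U₁, hU₁, hU₁', hD₁, hA₁⟩ := spec L₁ (lap_symm w₁ κ₁ hsymm₁) lam₁ hchar₁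
  obtain ⟨U₂, hU₂, hU₂', hD₂, hA₂⟩ := spec L₂ (lap_symm w₂ κ₂ hsymm₂) lam₂ hchar₂
  have hlam₂ : ∀ i, 0 ≤ lam₂ i := by
    intro i
    have h1 : lam₂ i = (fun a => U₂ a i) ⬝ᵥ L₂ *ᵥ (fun a => U₂ a i) := by
      have := congrFun (congrFun hD₂ i) i
      rw [Matrix.diagonal_apply_eq] at this
      rw [← this, Matrix.mul_assoc]
      rfl
    have h2 := lap_quad w₂ κ₂ hsymm₂ (fun a => U₂ a i)
    have h3 : 0 ≤ ∑ a, ∑ b, w₂ a b * (U₂ a i - U₂ b i) ^ 2 :=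
      Finset.sum_nonneg (fun a _ => Finset.sum_nonneg
        (fun b _ => mul_nonneg (hw₂ _ _) (sq_nonneg _)))
    have h4 : 0 ≤ ∑ a, κ₂ a * U₂ a i ^ 2 :=
      Finset.sum_nonneg (fun a _ => mul_nonneg (hκ₂ _) (sq_nonneg _))
    linarith
  have hdiag : ∀ y, L₂ y y ≤ lam₂ ⟨n₂ - 1, by omega⟩ := by
    intro y
    have h1 : L₂ y y = ∑ i, lam₂ i * U₂ y i ^ 2 := by
      rw [hA₂, Matrix.mul_apply]
      apply Finset.sum_congr rfl; intro i _
      rw [Matrix.mul_diagonal, Matrix.transpose_apply]; ring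
    have h2 : ∑ i, U₂ y i ^ 2 = 1 := by
      have := congrFun (congrFun hU₂' y) y
      rw [Matrix.one_apply_eq, Matrix.mul_apply] at this
      rw [← this]
      apply Finset.sum_congr rfl; intro i _
      rw [Matrix.transpose_apply]; ring
    rw [h1, ← mul_one (lam₂ ⟨n₂ - 1, by omega⟩), ← h2, Finset.mul_sum]
    apply Finset.sum_le_sum; intro i _
    apply mul_le_mul_of_nonneg_right _ (sq_nonneg _)
    apply hmono₂
    rw [Fin.le_def]; have := i.2; simp only; omega
  -- lower bound on the eigenvalue of the product
  have hkn : k * n₂ < n₁ * n₂ := mul_lt_mul_of_pos_right (by omega) hn₂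
  have hknpos : 0 < k * n₂ := Nat.mul_pos (by omega) hn₂
  set Λ := lam ⟨k * n₂ - 1, by omega⟩ with hΛ
  have hΛge : lam₁ ⟨k - 1, by omega⟩ + lam₂ ⟨n₂ - 1, by omega⟩ ≤ Λ := by
    have hcp : (lap (prodWeight w₁ w₂) (prodPotential κ₁ κ₂)).charpoly =
        ∏ p : Fin n₁ × Fin n₂, (X - C (lam₁ p.1 + lam₂ p.2)) := by
      have e : lap (prodWeight w₁ w₂) (prodPotential κ₁ κ₂) =
          Matrix.kronecker U₁ U₂ * diagonal (fun p : Fin n₁ × Fin n₂ => lam₁ p.1 + lam₂ p.2) *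
            Matrix.kronecker U₁ᵀ U₂ᵀ := by
        have ed : diagonal (fun p : Fin n₁ × Fin n₂ => lam₁ p.1 + lam₂ p.2) =
            Matrix.kronecker (diagonal lam₁) 1 + Matrix.kronecker 1 (diagonal lam₂) := by
          ext ⟨a, b⟩ ⟨a', b'⟩
          simp only [Matrix.add_apply, Matrix.diagonal_apply, Matrix.kronecker,
            Matrix.kroneckerMap_apply, Matrix.one_apply, Prod.mk.injEq]
          by_cases h1 : a = a' <;> by_cases h2 : b = b' <;> simp [h1, h2]
        rw [lap_prod, ed, Matrix.mul_add, Matrix.add_mul]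
        simp only [Matrix.kronecker, ← Matrix.mul_kronecker_mul, Matrix.mul_one, hU₁', hU₂',
          ← hA₁, ← hA₂]
        rfl
      rw [e, Matrix.charpoly_mul_comm, ← Matrix.mul_assoc]
      simp only [Matrix.kronecker, ← Matrix.mul_kronecker_mul, hU₁, hU₂]
      rw [Matrix.one_kronecker_one, Matrix.one_mul, Matrix.charpoly_diagonal]
    rw [hchar] at hcp
    obtain ⟨σ, hσ⟩ := roots_equiv _ _ hcp
    by_contra! hlt
    set top : Fin n₁ × Fin n₂ := (⟨k - 1, by omega⟩, ⟨n₂ - 1, by omega⟩) with htop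
    let B : Finset (Fin n₁ × Fin n₂) :=
      ((Finset.univ.filter (fun a : Fin n₁ => a.1 < k)) ×ˢ Finset.univ).erase top
    have hBcard : B.card = k * n₂ - 1 := by
      rw [Finset.card_erase_of_mem, Finset.card_product, Finset.card_univ, Fintype.card_fin]
      · congr 2
        rw [Fin.card_filter_val_lt]; omega
      · simp [htop]; omega
    let f : Fin (k * n₂) → Fin n₁ × Fin n₂ := fun i => σ ⟨i.1, by have := i.2; omega⟩
    have hfinj : Function.Injective f := by
      intro i j hij
      have := σ.injective hij
      simpa [Fin.ext_iff] using this
    have hfB : ∀ i, f i ∈ B := by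
      intro i
      have h1 : lam₁ (f i).1 + lam₂ (f i).2 ≤ Λ := by
        have h := hσ ⟨i.1, by have := i.2; omega⟩
        change lam₁ (f i).1 + lam₂ (f i).2 = _ at h
        rw [h]
        apply hmono
        rw [Fin.le_def]; have := i.2; simp only; omega
      simp only [B, Finset.mem_erase, Finset.mem_product, Finset.mem_filter, Finset.mem_univ,
        true_and, and_true]
      constructor
      · intro he
        rw [he] at h1
        simp only [htop] at h1
        linarith
      · by_contra! hge
        have h2 : lam₁ ⟨k, by omega⟩ ≤ lam₁ (f i).1 := hmono₁ (by rw [Fin.le_def]; exact hge)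
        have h3 := hlam₂ (f i).2
        linarith
    have := Finset.card_le_card_of_injOn (s := Finset.univ) (t := B) f (fun i _ => hfB i)
      hfinj.injOn
    rw [hBcard, Finset.card_univ, Fintype.card_fin] at this
    omega
  -- disjoint functions on the tree
  have hT : G₁.IsTree := by
    rw [SimpleGraph.isTree_iff_connected_and_card]
    refine ⟨hconn, ?_⟩
    rw [Nat.card_eq_fintype_card, ← SimpleGraph.edgeFinset_card, htree]
    simp; omega
  set ℓ := lam₁ ⟨k - 1, by omega⟩ with hℓ
  let e : Fin k → Fin n₁ := Fin.castLE (by omega)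
  have he : Function.Injective e := Fin.castLE_injective _
  set Uk := U₁.submatrix id e with hUk
  have hUk1 : Ukᵀ * Uk = 1 := by
    have : Ukᵀ * Uk = (U₁ᵀ * U₁).submatrix e e := by
      ext i j; simp [Matrix.mul_apply, hUk]
    rw [this, hU₁, Matrix.submatrix_one _ he]
  have hUk2 : Ukᵀ * L₁ * Uk = diagonal (lam₁ ∘ e) := by
    have : Ukᵀ * L₁ * Uk = (U₁ᵀ * L₁ * U₁).submatrix e e := by
      ext i j; simp [Matrix.mul_apply, hUk]
    rw [this, hD₁, Matrix.submatrix_diagonal _ _ he]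
  have hinj : Function.Injective Uk.mulVecLin := by
    intro x y hxy
    have := congrArg (fun z => Ukᵀ *ᵥ z) hxy
    simpa [Matrix.mulVec_mulVec, hUk1] using this
  obtain ⟨g, hg1, -, hg3, hg4⟩ := tree_disjoint G₁ hT _ Finset.univ rfl (L₁ - ℓ • 1) (by
      intro i j
      simp [lap_symm w₁ κ₁ hsymm₁ i j, hL₁, Matrix.one_apply, eq_comm]) (by
      intro i _ j _ hij hadj
      simp [hL₁, lap, hij, hzero₁ i j hadj]) k (LinearMap.range Uk.mulVecLin)
      (by rw [LinearMap.finrank_range_of_inj hinj]; simp) (by simp) (by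
      rintro _ ⟨x, rfl⟩
      have h1 : (Uk.mulVecLin x) ⬝ᵥ (L₁ - ℓ • 1) *ᵥ (Uk.mulVecLin x) =
          x ⬝ᵥ (Ukᵀ * L₁ * Uk - ℓ • (Ukᵀ * Uk)) *ᵥ x := by
        have h0 : Ukᵀ * L₁ * Uk - ℓ • (Ukᵀ * Uk) = Ukᵀ * ((L₁ - ℓ • 1) * Uk) := by
          simp [Matrix.sub_mul, Matrix.mul_sub, Matrix.mul_assoc]
        rw [h0, ← Matrix.mulVec_mulVec, ← Matrix.mulVec_mulVec, Matrix.mulVecLin_apply,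
          Matrix.dotProduct_mulVec x Ukᵀ, Matrix.vecMul_transpose]
      rw [h1, hUk1, hUk2]
      apply Finset.sum_nonpos
      intro i _
      rw [Matrix.sub_mulVec, Matrix.smul_mulVec, Matrix.one_mulVec]
      simp only [Pi.sub_apply, Matrix.mulVec_diagonal, Pi.smul_apply, smul_eq_mul,
        Function.comp_apply]
      have hle : lam₁ (e i) ≤ ℓ := hmono₁ (by
        rw [Fin.le_def]; have := i.2; simp only [e, Fin.val_castLE]; omega)
      nlinarith [mul_self_nonneg (x i)])
  have hg5 : ∀ a, g a ⬝ᵥ L₁ *ᵥ g a ≤ ℓ * ∑ i, g a i ^ 2 := by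
    intro a
    have := hg4 a
    rw [Matrix.sub_mulVec, Matrix.smul_mulVec, Matrix.one_mulVec, dotProduct_sub,
      dotProduct_smul] at this
    have h2 : g a ⬝ᵥ g a = ∑ i, g a i ^ 2 := by simp [dotProduct, sq]
    rw [h2, smul_eq_mul] at this
    linarith
  -- product weights
  set w := prodWeight w₁ w₂ with hw
  have hws : ∀ p q, w p q = w q p := by
    intro p q
    simp only [hw, prodWeight, hsymm₁ p.1 q.1, hsymm₂ p.2 q.2, eq_comm]
  have hw0 : ∀ p q, 0 ≤ w p q := by
    intro p q
    simp only [hw, prodWeight]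
    apply add_nonneg <;> split_ifs <;> simp [hw₁, hw₂]
  have hτ : ∀ p, ∑ q, w p q ≤ tauMax w (fun _ => 1) := by
    intro p
    have := le_ciSup (f := fun i => (∑ j, w i j) / (1:ℝ)) (Set.finite_range _).bddAbove p
    simpa [tauMax] using this
  have hκ : ∀ p, 0 ≤ prodPotential κ₁ κ₂ p := fun p => add_nonneg (hκ₁ _) (hκ₂ _)
  have hsets : ∀ ay : Fin k × Fin n₂, ∃ A : Finset (Fin n₁ × Fin n₂), A.Nonempty ∧
      (∀ p ∈ A, g ay.1 p.1 ≠ 0 ∧ p.2 = ay.2) ∧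
      conductance w (fun _ => 1) A ≤ Real.sqrt (2 * tauMax w (fun _ => 1) * Λ) := by
    rintro ⟨a, y⟩
    set F : Fin n₁ × Fin n₂ → ℝ := fun p => if p.2 = y then g a p.1 else 0 with hF
    have hFn : ∑ p, F p ^ 2 = ∑ i, g a i ^ 2 := by
      rw [Fintype.sum_prod_type]
      simp [hF, ite_pow]
    have hFq : F ⬝ᵥ lap w (prodPotential κ₁ κ₂) *ᵥ F =
        g a ⬝ᵥ L₁ *ᵥ g a + L₂ y y * ∑ i, g a i ^ 2 := by
      rw [hw, lap_prod, Matrix.add_mulVec, dotProduct_add]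
      congr 1
      · simp [dotProduct, Matrix.mulVec, Fintype.sum_prod_type, hF, Matrix.kronecker,
          Matrix.one_apply, hL₁]
      · simp [dotProduct, Matrix.mulVec, Fintype.sum_prod_type, hF, Matrix.kronecker,
          Matrix.one_apply, hL₂, Finset.mul_sum]
        apply Finset.sum_congr rfl; intro i _
        ring
    have hq := lap_quad w (prodPotential κ₁ κ₂) hws F
    have hκF : 0 ≤ ∑ p, prodPotential κ₁ κ₂ p * F p ^ 2 :=
      Finset.sum_nonneg (fun p _ => mul_nonneg (hκ p) (sq_nonneg _))
    have hN0 : 0 ≤ ∑ i, g a i ^ 2 := Finset.sum_nonneg (fun i _ => sq_nonneg _)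
    obtain ⟨A, h1, h2, h3⟩ := cheeger_level w hws hw0 (tauMax w (fun _ => 1)) Λ hτ F (by
        intro h
        apply hg1 a
        ext i
        have := congrFun h (i, y)
        simpa [hF] using this) (by
        rw [hFn]
        have t1 := hg5 a
        have t2 := mul_le_mul_of_nonneg_right (hdiag y) hN0
        have t3 := mul_le_mul_of_nonneg_right hΛge hN0
        rw [hFq] at hq
        linarith)
    refine ⟨A, h1, fun p hp => ?_, h3⟩
    have := h2 p hp
    simp only [hF] at this
    by_cases hpy : p.2 = y
    · simpa [hpy] using this
    · simp [hpy] at this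
  choose A hA1 hA2 hA3 using hsets
  have : Nonempty (Fin (k * n₂)) := ⟨⟨0, hknpos⟩⟩
  calc cheeger (k * n₂) w (fun _ => 1)
      ≤ ⨆ i, conductance w (fun _ => 1) (A (finProdFinEquiv.symm i)) := by
        apply csInf_le
        · refine ⟨0, ?_⟩
          rintro r ⟨B, -, -, rfl⟩
          apply Real.iSup_nonneg
          intro i
          unfold conductance
          apply div_nonneg
          · exact Finset.sum_nonneg (fun i _ => Finset.sum_nonneg (fun j _ => hw0 i j))
          · simp
        · refine ⟨fun i => A (finProdFinEquiv.symm i), fun i => hA1 _, ?_, rfl⟩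
          intro i j hij
          rw [Function.onFun, Finset.disjoint_left]
          intro p hp hp'
          have q1 := hA2 _ p hp
          have q2 := hA2 _ p hp'
          have hne : finProdFinEquiv.symm i ≠ finProdFinEquiv.symm j := fun h =>
            hij (finProdFinEquiv.symm.injective h)
          have hy := q1.2.symm.trans q2.2
          have hx : (finProdFinEquiv.symm i).1 ≠ (finProdFinEquiv.symm j).1 := fun h =>
            hne (Prod.ext h hy)
          rcases hg3 _ _ hx p.1 with h | h
          · exact q1.1 h
          · exact q2.1 h
    _ ≤ _ := ciSup_le (fun i => hA3 _)
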